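/- Fix a real number c with 0 < c < 1. Then there exist ε ∈ (0, c²) and a constant C > 0 such that for all real t with 0 < t < ε, | ∫_{t/c}^{c} (π/|log t|)·(1/ sin(π·(log z)/(log t)))·(1/z) dz − 2·log(|log t|) | ≤ C. (For z ∈ (t/c, c) one has (log z)/(log t) ∈ (0,1), so the integrand is positive; this is the asymptotic computation of the diameter of the collar core of the model hyperbolic metric in a degenerating family of Riemann surfaces, showing it grows like 2·log(−log t) up to a bounded error.) -/

import Mathlib

open scoped Topology

/-- **Statement 16.** For fixed `0 < c < 1`, there are `ε ∈ (0, c²)` and `C > 0` such that for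
all `0 < t < ε` the diameter integral of the collar core of the model hyperbolic metric,
`∫_{t/c}^{c} (π/|log t|)·csc(π·(log z)/(log t))·(1/z) dz`, differs from `2·log(|log t|)` by at
most `C`. -/
theorem statement16 (c : ℝ) (hc0 : 0 < c) (hc1 : c < 1) :
    ∃ ε : ℝ, 0 < ε ∧ ε < c ^ 2 ∧ ∃ C : ℝ, 0 < C ∧
      ∀ t : ℝ, 0 < t → t < ε →
        abs ((∫ z in (t / c)..c,
            (Real.pi / |Real.log t|) * (1 / Real.sin (Real.pi * Real.log z / Real.log t)) *
              (1 / z)) -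
          2 * Real.log |Real.log t|) ≤ C := by
  have ha : 0 < -Real.log c := by linarith [Real.log_neg hc0 hc1]
  set a := -Real.log c with hadef
  have hpi := Real.pi_pos
  refine ⟨c ^ 4, by positivity, pow_lt_pow_right_of_lt_one₀ hc0 hc1 (by norm_num),
    2 * |Real.log (Real.pi * a / 2)| + 2 * |Real.log (Real.pi * a)| + 1, by positivity, ?_⟩
  intro t ht0 htc
  have hL : Real.log t < -(4 * a) := by
    have h := Real.log_lt_log ht0 htc
    rw [Real.log_pow] at h
    push_cast at h
    linarith
  have hlneg : Real.log t < 0 := by linarith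
  rw [abs_of_neg hlneg]
  obtain ⟨T, hT⟩ : ∃ T, T = -Real.log t := ⟨_, rfl⟩
  have hlt : Real.log t = -T := by linarith
  have hT4 : 4 * a < T := by linarith
  have hT0 : 0 < T := by linarith
  rw [hlt, neg_neg]
  have htc' : t / c ≤ c := by
    rw [div_le_iff₀ hc0]
    have : c ^ 4 ≤ c ^ 2 := pow_le_pow_of_le_one hc0.le hc1.le (by norm_num)
    nlinarith
  have hlogtc : Real.log (t / c) = -T + a := by
    rw [Real.log_div ht0.ne' hc0.ne', hlt, hadef]; ring
  have htc0 : 0 < t / c := by positivity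
  have key : ∀ z ∈ Set.uIcc (t / c) c, 0 < z ∧
      0 < Real.pi * Real.log z / (2 * -T) ∧
      Real.pi * Real.log z / (2 * -T) < Real.pi / 2 := by
    intro z hz
    rw [Set.uIcc_of_le htc'] at hz
    have hz0 : 0 < z := lt_of_lt_of_le htc0 hz.1
    have h1 := Real.log_le_log htc0 hz.1
    have h2 := Real.log_le_log hz0 hz.2
    rw [hlogtc] at h1
    have e : Real.pi * Real.log z / (2 * -T) = (Real.pi * -Real.log z) / (2 * T) := by
      field_simp
    refine ⟨hz0, ?_, ?_⟩
    · rw [e]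
      have : 0 < -Real.log z := by linarith
      positivity
    · rw [e, div_lt_div_iff₀ (by positivity) (by norm_num)]
      have : -Real.log z < T := by linarith
      nlinarith
  have hsin : ∀ z ∈ Set.uIcc (t / c) c, 0 < Real.sin (Real.pi * Real.log z / (2 * -T)) := by
    intro z hz
    obtain ⟨h0, h1, h2⟩ := key z hz
    exact Real.sin_pos_of_pos_of_lt_pi h1 (by linarith)
  have hcos : ∀ z ∈ Set.uIcc (t / c) c, 0 < Real.cos (Real.pi * Real.log z / (2 * -T)) := by
    intro z hz
    obtain ⟨h0, h1, h2⟩ := key z hz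
    exact Real.cos_pos_of_mem_Ioo ⟨by linarith, h2⟩
  have hdbl : ∀ z : ℝ, Real.sin (Real.pi * Real.log z / -T) =
      2 * Real.sin (Real.pi * Real.log z / (2 * -T)) *
        Real.cos (Real.pi * Real.log z / (2 * -T)) := by
    intro z
    rw [← Real.sin_two_mul]
    congr 1
    field_simp
  have hint : ∫ z in (t / c)..c,
            (Real.pi / T) * (1 / Real.sin (Real.pi * Real.log z / -T)) * (1 / z) =
      (Real.log (Real.cos (Real.pi * Real.log c / (2 * -T))) -
        Real.log (Real.sin (Real.pi * Real.log c / (2 * -T)))) -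
      (Real.log (Real.cos (Real.pi * Real.log (t / c) / (2 * -T))) -
        Real.log (Real.sin (Real.pi * Real.log (t / c) / (2 * -T)))) := by
    refine intervalIntegral.integral_eq_sub_of_hasDerivAt
      (f := fun z => Real.log (Real.cos (Real.pi * Real.log z / (2 * -T))) -
        Real.log (Real.sin (Real.pi * Real.log z / (2 * -T)))) ?_ ?_
    · intro z hz
      obtain ⟨h0, -, -⟩ := key z hz
      have hs := hsin z hz
      have hk := hcos z hz
      have hv : HasDerivAt (fun z => Real.pi * Real.log z / (2 * -T))
          (Real.pi * z⁻¹ / (2 * -T)) z :=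
        ((Real.hasDerivAt_log h0.ne').const_mul _).div_const _
      have hd := (hv.cos.log hk.ne').sub (hv.sin.log hs.ne')
      refine hd.congr_deriv ?_
      rw [hdbl]
      have hsq := Real.sin_sq_add_cos_sq (Real.pi * Real.log z / (2 * -T))
      generalize Real.sin (Real.pi * Real.log z / (2 * -T)) = s at *
      generalize Real.cos (Real.pi * Real.log z / (2 * -T)) = k at *
      field_simp
      linarith
    · apply ContinuousOn.intervalIntegrable
      have hne : ∀ z ∈ Set.uIcc (t / c) c, Real.sin (Real.pi * Real.log z / -T) ≠ 0 := by
        intro z hz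
        rw [hdbl]
        have hs := hsin z hz
        have hk := hcos z hz
        positivity
      have hz0 : ∀ z ∈ Set.uIcc (t / c) c, z ≠ 0 := fun z hz => (key z hz).1.ne'
      have hlog : ContinuousOn Real.log (Set.uIcc (t / c) c) :=
        continuousOn_id.log hz0
      refine (continuousOn_const.mul (continuousOn_const.div ?_ hne)).mul
        (continuousOn_const.div continuousOn_id hz0)
      exact Real.continuous_sin.comp_continuousOn ((continuousOn_const.mul hlog).div_const _)
  rw [hint]
  have e1 : Real.pi * Real.log c / (2 * -T) = Real.pi * a / (2 * T) := by
    rw [hadef]; field_simp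
  have e2 : Real.pi * Real.log (t / c) / (2 * -T) = Real.pi / 2 - Real.pi * a / (2 * T) := by
    rw [hlogtc]; field_simp; ring
  rw [e1, e2, Real.cos_pi_div_two_sub, Real.sin_pi_div_two_sub]
  obtain ⟨θ, hθ⟩ : ∃ θ, θ = Real.pi * a / (2 * T) := ⟨_, rfl⟩
  rw [← hθ]
  have hθT : T * θ = Real.pi * a / 2 := by rw [hθ]; field_simp
  have hθ0 : 0 < θ := by rw [hθ]; positivity
  have hθ1 : θ < 1 := by
    rw [hθ, div_lt_one (by positivity)]
    nlinarith [Real.pi_lt_four]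
  have hs0 : 0 < Real.sin θ := Real.sin_pos_of_pos_of_lt_pi hθ0 (by linarith [Real.pi_gt_three])
  have hk0 : 0 < Real.cos θ :=
    Real.cos_pos_of_mem_Ioo ⟨by linarith, by linarith [Real.pi_gt_three]⟩
  have hk2 : 1 / 2 ≤ Real.cos θ := by
    have := Real.one_sub_sq_div_two_le_cos (x := θ)
    nlinarith
  have hlow : θ ≤ Real.tan θ := Real.le_tan hθ0.le (by linarith [Real.pi_gt_three])
  have hup : Real.tan θ ≤ 2 * θ := by
    rw [Real.tan_eq_sin_div_cos, div_le_iff₀ hk0]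
    have := Real.sin_le hθ0.le
    nlinarith
  have hlogtan : Real.log (T * Real.tan θ) =
      Real.log T + (Real.log (Real.sin θ) - Real.log (Real.cos θ)) := by
    rw [Real.tan_eq_sin_div_cos, Real.log_mul hT0.ne' (by positivity),
      Real.log_div hs0.ne' hk0.ne']
  have hA : Real.log (Real.pi * a / 2) ≤ Real.log (T * Real.tan θ) := by
    apply Real.log_le_log (by positivity)
    rw [← hθT]; gcongr
  have hB : Real.log (T * Real.tan θ) ≤ Real.log (Real.pi * a) := by
    apply Real.log_le_log (by have := lt_of_lt_of_le hθ0 hlow; positivity)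
    nlinarith
  have a1 := neg_abs_le (Real.log (Real.pi * a / 2))
  have a2 := le_abs_self (Real.log (Real.pi * a))
  have a3 := abs_nonneg (Real.log (Real.pi * a / 2))
  have a4 := abs_nonneg (Real.log (Real.pi * a))
  rw [abs_le]
  constructor <;> linarith
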